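/- Let q = qᴿ + qᴵ·i be a Gaussian prime with qᴿ > qᴵ ≥ 1. Every valid difference δ satisfies N(δ) ≤ 2·N(q) − 4·qᴿ + 2; in particular, both components of any distance-valid difference pair satisfy this bound. -/

import Mathlib

open GaussianInt

/-- A Gaussian integer `w` is a valid symbol (representative element of `ℤ[i]/q`) if both of
its coordinates in the rotated basis `(q/|q|, i·q/|q|)` have absolute value less than `|q|/2`,
i.e. `2·|Re(w·q̄)| < N(q)` and `2·|Im(w·q̄)| < N(q)`. -/
def IsValidSymbol (q w : GaussianInt) : Prop :=
  2 * |(w * star q).re| < q.norm ∧ 2 * |(w * star q).im| < q.norm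

/-- A Gaussian integer `δ` is a valid difference if `δ = w − w′` for valid symbols `w, w′`. -/
def IsValidDiff (q δ : GaussianInt) : Prop :=
  ∃ w w' : GaussianInt, IsValidSymbol q w ∧ IsValidSymbol q w' ∧ δ = w - w'

/-- `(δA, δB)` is a distance-valid difference pair if both components are valid differences
and `(δA, δB) ≠ (0, 0)`. -/
def IsDistanceValidPair (q δA δB : GaussianInt) : Prop :=
  IsValidDiff q δA ∧ IsValidDiff q δB ∧ (δA, δB) ≠ (0, 0)

lemma aux_quad (a b x y : ℤ) (h1 : 1 ≤ b) (h2 : b < a) (ho : (a + b) % 2 = 1)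
    (hu0 : 0 ≤ a * x + b * y) (hv0 : 0 ≤ a * y - b * x)
    (hu : 2 * (a * x + b * y) < a * a + b * b) (hv : 2 * (a * y - b * x) < a * a + b * b) :
    4 * (x * x + y * y) ≤ (a - b - 1) ^ 2 + (a + b - 1) ^ 2 := by
  have hN : 0 < a * a + b * b := by nlinarith
  have hy0 : 0 ≤ y := by
    by_contra h
    nlinarith [mul_nonneg (by linarith : (0:ℤ) ≤ b) hu0, mul_nonneg (by linarith : (0:ℤ) ≤ a) hv0]
  have hy1 : 2 * y < a + b := by
    by_contra h
    push Not at h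
    nlinarith [mul_lt_mul_of_pos_left hu (by linarith : (0:ℤ) < b),
      mul_lt_mul_of_pos_left hv (by linarith : (0:ℤ) < a), mul_le_mul_of_nonneg_left h hN.le]
  have hx1 : 2 * x < a := by
    by_contra h
    push Not at h
    nlinarith [mul_nonneg (by linarith : (0:ℤ) ≤ b) hv0,
      mul_lt_mul_of_pos_left hu (by linarith : (0:ℤ) < a), mul_le_mul_of_nonneg_left h hN.le]
  have hx2 : -b < 2 * x := by
    by_contra h
    push Not at h
    nlinarith [mul_nonneg (by linarith : (0:ℤ) ≤ a) hu0,
      mul_lt_mul_of_pos_left hv (by linarith : (0:ℤ) < b), mul_le_mul_of_nonneg_left h hN.le]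
  have key : ∀ k X : ℤ, 1 ≤ k → k ≤ b → X * X = (a - b + k) * (a - b + k) → X * X = 4 * (x * x) →
      2 * y ≤ a + b - k - 2 → 4 * (x * x + y * y) ≤ (a - b - 1) ^ 2 + (a + b - 1) ^ 2 := by
    intro k X hk hkb hX hX2 hY
    have e1 : (2 * y) * (2 * y) ≤ (a + b - k - 2) * (a + b - k - 2) :=
      mul_self_le_mul_self (by linarith) hY
    have e2 : 0 ≤ (k + 1) * (4 * b - 2 * k - 2) :=
      mul_nonneg (by linarith) (by linarith)
    nlinarith
  by_cases hA : a - b + 1 ≤ 2 * x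
  · obtain ⟨k, hk⟩ : ∃ k, 2 * x = a - b + k := ⟨2 * x - (a - b), by ring⟩
    have hlt : 2 * y < a + b - k := by
      by_contra h
      push Not at h
      have := mul_le_mul_of_nonneg_left h (by linarith : (0:ℤ) ≤ b)
      have := mul_nonneg (by linarith : (0:ℤ) ≤ a - b) (by linarith : 0 ≤ k)
      have : a * (2 * x) = a * (a - b + k) := by rw [hk]
      nlinarith
    exact key k (2 * x) (by linarith) (by linarith) (by rw [hk]) (by ring) (by omega)
  by_cases hB : 2 * x ≤ -(a - b + 1)
  · obtain ⟨k, hk⟩ : ∃ k, 2 * x = -(a - b + k) := ⟨-2 * x - (a - b), by ring⟩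
    have hlt : 2 * y < a + b - k := by
      by_contra h
      push Not at h
      have := mul_le_mul_of_nonneg_left h (by linarith : (0:ℤ) ≤ a)
      have := mul_nonneg (by linarith : (0:ℤ) ≤ a - b) (by linarith : 0 ≤ 2 * b - k)
      have : b * (2 * x) = b * -(a - b + k) := by rw [hk]
      nlinarith
    exact key k (2 * x) (by linarith) (by linarith) (by rw [hk]; ring) (by ring) (by omega)
  · have e1 : (2 * y) * (2 * y) ≤ (a + b - 1) * (a + b - 1) :=
      mul_self_le_mul_self (by linarith) (by linarith)
    have e2 : (2 * x) ^ 2 ≤ (a - b - 1) ^ 2 := sq_le_sq' (by omega) (by omega)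
    nlinarith

lemma aux_sym (a b x y : ℤ) (h1 : 1 ≤ b) (h2 : b < a) (ho : (a + b) % 2 = 1)
    (hu : 2 * |a * x + b * y| < a * a + b * b) (hv : 2 * |a * y - b * x| < a * a + b * b) :
    4 * (x * x + y * y) ≤ (a - b - 1) ^ 2 + (a + b - 1) ^ 2 := by
  have hu1 := le_abs_self (a * x + b * y)
  have hu2 := neg_le_abs (a * x + b * y)
  have hv1 := le_abs_self (a * y - b * x)
  have hv2 := neg_le_abs (a * y - b * x)
  rcases le_total 0 (a * x + b * y) with hu0 | hu0 <;>
  rcases le_total 0 (a * y - b * x) with hv0 | hv0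
  · exact aux_quad a b x y h1 h2 ho hu0 hv0 (by linarith) (by linarith)
  · have := aux_quad a b (-y) x h1 h2 ho (by linarith) (by linarith) (by linarith) (by linarith)
    linarith
  · have := aux_quad a b y (-x) h1 h2 ho (by linarith) (by linarith) (by linarith) (by linarith)
    linarith
  · have := aux_quad a b (-x) (-y) h1 h2 ho (by linarith) (by linarith) (by linarith) (by linarith)
    linarith

lemma aux_odd (q : GaussianInt) (hq : Prime q) (h1 : 1 ≤ q.im) (h2 : q.im < q.re) :
    (q.re + q.im) % 2 = 1 := by
  by_contra h
  obtain ⟨c, hc⟩ : ∃ c, q.re + q.im = 2 * c := ⟨(q.re + q.im) / 2, by omega⟩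
  have e : q = (⟨1, 1⟩ : GaussianInt) * ⟨c, c - q.re⟩ := by
    apply Zsqrtd.ext <;> simp <;> linarith
  have hn : ∀ z : GaussianInt, IsUnit z → z.re * z.re + z.im * z.im = 1 := by
    intro z hz
    have := (Zsqrtd.norm_eq_one_iff' (by norm_num) z).2 hz
    rw [Zsqrtd.norm_def] at this
    linarith
  rcases hq.irreducible.isUnit_or_isUnit e with hz | hz
  · have := hn _ hz
    norm_num at this
  · have := hn _ hz
    dsimp only at this
    nlinarith

/-- Let `q = qᴿ + qᴵ·i` be a Gaussian prime with `qᴿ > qᴵ ≥ 1`. Every valid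
difference `δ` satisfies `N(δ) ≤ 2·N(q) − 4·qᴿ + 2`; in particular both components of any
distance-valid difference pair satisfy this bound. -/
theorem stmt3 (q : GaussianInt) (hq : Prime q) (h1 : 1 ≤ q.im) (h2 : q.im < q.re) :
    (∀ δ : GaussianInt, IsValidDiff q δ → δ.norm ≤ 2 * q.norm - 4 * q.re + 2) ∧
    (∀ δA δB : GaussianInt, IsDistanceValidPair q δA δB →
      δA.norm ≤ 2 * q.norm - 4 * q.re + 2 ∧ δB.norm ≤ 2 * q.norm - 4 * q.re + 2) := by
  have ho := aux_odd q hq h1 h2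
  have hs : ∀ w, IsValidSymbol q w →
      4 * (w.re * w.re + w.im * w.im) ≤ (q.re - q.im - 1) ^ 2 + (q.re + q.im - 1) ^ 2 := by
    rintro w ⟨hu, hv⟩
    rw [Zsqrtd.norm_def] at hu hv
    have e1 : (w * star q).re = q.re * w.re + q.im * w.im := by simp; ring
    have e2 : (w * star q).im = q.re * w.im - q.im * w.re := by simp; ring
    rw [e1] at hu
    rw [e2] at hv
    exact aux_sym _ _ _ _ h1 h2 ho (by linarith) (by linarith)
  have main : ∀ δ : GaussianInt, IsValidDiff q δ → δ.norm ≤ 2 * q.norm - 4 * q.re + 2 := by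
    rintro δ ⟨w, w', hw, hw', rfl⟩
    have a1 := hs w hw
    have a2 := hs w' hw'
    simp only [Zsqrtd.norm_def, Zsqrtd.re_sub, Zsqrtd.im_sub]
    nlinarith [sq_nonneg (w.re + w'.re), sq_nonneg (w.im + w'.im)]
  exact ⟨main, fun δA δB h => ⟨main δA h.1, main δB h.2.1⟩⟩
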